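/- arXiv:1504.01941 — 2 statements merged into one kernel-verified Lean document; each statement's English description precedes it below -/
import Mathlib

section
/- For every k with 1 ≤ k ≤ n-1, the following matrix identity holds: (∑_{m=k}^{n} M_q(t_{m,k})) · (I − M_q(t_{n,k}))·(I − M_q(t_{n-1,k}))⋯(I − M_q(t_{k+1,k})) = (I − D_k·M_q(t_{n,k+1}))·(I − D_k·M_q(t_{n-1,k+1}))⋯(I − D_k·M_q(t_{k+2,k+1}))·(I − D_k), where on each side the factors are multiplied in the displayed order. (This is the matrix form of the factorization β*_{n-k+1}·γ*_{n-k+1} = δ*_{n-k+1} in the twisted group algebra A(S_n).) -/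
/-- The square complex matrices indexed by the symmetric group `Equiv.Perm (Fin n)`. -/
abbrev PermMatrix (n : ℕ) := Matrix (Equiv.Perm (Fin n)) (Equiv.Perm (Fin n)) ℂ

/-- The set of inversions `I(g) = {(a,b) : a < b and g(a) > g(b)}` of a permutation. -/
def invSet {n : ℕ} (g : Equiv.Perm (Fin n)) : Finset (Fin n × Fin n) :=
  Finset.univ.filter fun p => p.1 < p.2 ∧ g p.2 < g p.1

/-- The matrix `M_q(g)`, with `(σ,τ)`-entry `∏_{(a,b) ∈ I(g)} q (τ b) (τ a)`
if `σ = τ ∘ g⁻¹` and `0` otherwise. -/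
def twistMat (n : ℕ) (q : Fin n → Fin n → ℂ) (g : Equiv.Perm (Fin n)) : PermMatrix n :=
  fun σ τ => if σ = τ * g⁻¹ then ∏ p ∈ invSet g, q (τ p.2) (τ p.1) else 0

/-- `IsTCycle a b s` says that `s` is the cycle `t_{b,a}` (for `a ≤ b`):
`s i = i + 1` for `a ≤ i ≤ b - 1`, `s b = a`, and `s i = i` otherwise
(in particular `t_{b,b} = id`). -/
def IsTCycle {n : ℕ} (a b : Fin n) (s : Equiv.Perm (Fin n)) : Prop :=
  (∀ i : Fin n, a ≤ i → i < b → (s i : ℕ) = (i : ℕ) + 1) ∧ s b = a ∧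
    ∀ i : Fin n, ¬(a ≤ i ∧ i ≤ b) → s i = i

/-- The successor `a + 1` in `Fin n` (computed mod `n`; in all uses below one has
`a + 1 < n`, so no wraparound occurs). -/
def finSucc {n : ℕ} (a : Fin n) : Fin n :=
  ⟨((a : ℕ) + 1) % n, Nat.mod_lt _ a.pos⟩

/-- The diagonal matrix `D_a = M_q(t_{a+1,a})²` whose diagonal entry at `τ` is
`q (τ a) (τ (a+1)) · q (τ (a+1)) (τ a)`. -/
def Dmat (n : ℕ) (q : Fin n → Fin n → ℂ) (a : Fin n) : PermMatrix n :=
  Matrix.diagonal fun τ => q (τ a) (τ (finSucc a)) * q (τ (finSucc a)) (τ a)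

/-!
`M_q` is multiplicative up to a diagonal cocycle: `M_q(g) M_q(h) = N(g, h) M_q(gh)`, where the
entry of `N(g, h)` at `σ` is the product of `q (σ a) (σ b) * q (σ b) (σ a)` over the pairs `(a, b)`
in `I(g⁻¹) \ I((gh)⁻¹)`. For `k ≤ p < j` one has `t_{p+1,k} t_{j,k} = t_{j,k+1} t_{p,k}`, and
the cocycle is `D_k` on the left and `1` on the right, hence
`M_q(t_{p+1,k}) M_q(t_{j,k}) = D_k M_q(t_{j,k+1}) M_q(t_{p,k})`.
Summing over `p`, the partial sums `β_j = ∑_{m=k}^{j} M_q(t_{m,k})` satisfy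
`β_j (1 - M_q(t_{j,k})) = (1 - D_k M_q(t_{j,k+1})) β_{j-1}`. Moving `β_n` through the product
of the `1 - M_q(t_{j,k})` therefore turns it into `β_k = 1`; the factor for `j = k + 1` becomes
`1 - D_k`.
-/

section Telescoping

theorem mul_prod_reverse_Ico_of_intertwine {M : Type*} [Monoid M] {x a b : ℕ → M} {m n : ℕ}
    (hmn : m ≤ n) (h : ∀ j, m ≤ j → j < n → x (j + 1) * a j = b j * x j) :
    x n * ((List.Ico m n).reverse.map a).prod = ((List.Ico m n).reverse.map b).prod * x m := by
  induction n, hmn using Nat.le_induction with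
  | base => simp
  | succ n hmn ih =>
    simp only [List.Ico.succ_top hmn, List.reverse_append, List.reverse_singleton,
      List.singleton_append, List.map_cons, List.prod_cons]
    rw [← mul_assoc, h n hmn n.lt_succ_self, mul_assoc,
      ih fun j hmj hjn => h j hmj (hjn.trans n.lt_succ_self), mul_assoc]

variable {R : Type*} [Ring R]

theorem sum_Ico_succ_mul_one_sub {T : ℕ → R} {u : R} {k j : ℕ} (hkj : k ≤ j) (hk : T k = 1)
    (h : ∀ p, k ≤ p → p < j → T (p + 1) * T j = u * T p) :
    (∑ m ∈ Finset.Ico k (j + 1), T m) * (1 - T j) = (1 - u) * ∑ m ∈ Finset.Ico k j, T m := by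
  have shift : (∑ m ∈ Finset.Ico k j, T (m + 1)) * T j = u * ∑ m ∈ Finset.Ico k j, T m := by
    rw [Finset.sum_mul, Finset.mul_sum]
    exact Finset.sum_congr rfl fun p hp => h p (Finset.mem_Ico.1 hp).1 (Finset.mem_Ico.1 hp).2
  have last_mul : (∑ m ∈ Finset.Ico k (j + 1), T m) * T j =
      T j + u * ∑ m ∈ Finset.Ico k j, T m := by
    rw [Finset.sum_eq_sum_Ico_succ_bot (Nat.lt_succ_of_le hkj), ← Finset.sum_Ico_add' T k j 1,
      add_mul, hk, one_mul, shift]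
  rw [mul_sub, mul_one, last_mul, Finset.sum_Ico_succ_top hkj, sub_mul, one_mul]
  abel

theorem sum_Ico_mul_prod_one_sub {T U : ℕ → R} {k n : ℕ} (hkn : k < n) (hk : T k = 1)
    (h : ∀ p j, k ≤ p → p < j → j < n → T (p + 1) * T j = U j * T p) :
    (∑ m ∈ Finset.Ico k n, T m) * ((List.Ico (k + 1) n).reverse.map fun m => 1 - T m).prod =
      ((List.Ico (k + 1) n).reverse.map fun m => 1 - U m).prod := by
  have telescope := mul_prod_reverse_Ico_of_intertwine (x := fun j => ∑ m ∈ Finset.Ico k j, T m)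
    (a := fun j => 1 - T j) (b := fun j => 1 - U j) hkn fun j hkj hjn =>
      sum_Ico_succ_mul_one_sub (Nat.le_of_succ_le hkj) hk fun p hkp hpj => h p j hkp hpj hjn
  simpa [hk] using telescope

end Telescoping

section FinLists

variable {n : ℕ}

theorem covBy_iff_val_add_one_eq {a b : Fin n} : a ⋖ b ↔ (a : ℕ) + 1 = b := by
  rw [Fin.covBy_iff, Nat.covBy_iff_add_one_eq]

theorem map_val_filter_lt_finRange (k : Fin n) :
    ((List.finRange n).filter fun m => decide (k < m)).map Fin.val = List.Ico (k + 1) n := by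
  have filter_range : (List.range n).filter (fun m => decide ((k : ℕ) < m)) =
      List.Ico (k + 1) n := by
    simpa [List.Ico.zero_bot] using List.Ico.filter_le 0 n (k + 1)
  rw [← filter_range, ← List.map_coe_finRange_eq_range, List.filter_map]
  rfl

theorem filter_lt_finRange_eq_cons {k k' : Fin n} (hk : k ⋖ k') :
    ((List.finRange n).filter fun m => decide (k < m)) =
      k' :: (List.finRange n).filter fun m => decide (k' < m) := by
  have hval : (k : ℕ) + 1 = k' := covBy_iff_val_add_one_eq.1 hk
  apply List.map_injective_iff.2 Fin.val_injective
  rw [List.map_cons, map_val_filter_lt_finRange, map_val_filter_lt_finRange, hval,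
    List.Ico.eq_cons k'.isLt]

theorem sum_Ici_mul_prod_one_sub {R : Type*} [Ring R] {T U : Fin n → R} {k : Fin n}
    (hk : T k = 1) (h : ∀ p m j, k ≤ p → p ⋖ m → p < j → T m * T j = U j * T p) :
    (∑ m ∈ Finset.Ici k, T m) *
        (((List.finRange n).filter fun m => decide (k < m)).reverse.map fun m => 1 - T m).prod =
      (((List.finRange n).filter fun m => decide (k < m)).reverse.map fun m => 1 - U m).prod := by
  have : NeZero n := k.neZero
  have key := sum_Ico_mul_prod_one_sub (T := T ∘ Fin.ofNat n) (U := U ∘ Fin.ofNat n) k.isLt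
    (by simpa using hk) fun p j hkp hpj hjn => by
      have hm : p + 1 < n := by omega
      have val_ofNat {i : ℕ} (hi : i < n) : Fin.ofNat n i = ⟨i, hi⟩ :=
        Fin.ext (Nat.mod_eq_of_lt hi)
      simp only [Function.comp_apply, val_ofNat hjn, val_ofNat hm, val_ofNat (hpj.trans hjn)]
      exact h _ _ _ hkp (covBy_iff_val_add_one_eq.2 rfl) hpj
  simpa [← Fin.map_valEmbedding_Ici, ← map_val_filter_lt_finRange, ← List.map_reverse,
    Function.comp_def] using key

end FinLists

section TwistMat

variable {n : ℕ}

@[simp]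
theorem mem_invSet {g : Equiv.Perm (Fin n)} {p : Fin n × Fin n} :
    p ∈ invSet g ↔ p.1 < p.2 ∧ g p.2 < g p.1 := by
  simp [invSet]

@[simp]
theorem invSet_one : invSet (1 : Equiv.Perm (Fin n)) = ∅ := by
  ext p
  simpa using fun h => h.le

theorem prod_invSet_comp_inv {M : Type*} [CommMonoid M] (g h : Equiv.Perm (Fin n))
    (f : Fin n → Fin n → M) :
    ∏ p ∈ invSet h, f (g⁻¹ p.1) (g⁻¹ p.2) =
      (∏ p ∈ invSet (h * g) \ invSet g, f p.1 p.2) *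
        ∏ p ∈ invSet g \ invSet (h * g), f p.2 p.1 := by
  have le_iff_lt (s : Equiv.Perm (Fin n)) {a b : Fin n} (hab : a < b) : s b ≤ s a ↔ s b < s a :=
    (s.injective.ne hab.ne').le_iff_lt
  -- Pulled back by `g`, a pair inverted by `h` either stays increasing, and is then inverted by
  -- `h * g` but not by `g`, or becomes decreasing, and its swap is inverted by `g` but not `h * g`.
  rw [← Finset.prod_filter_mul_prod_filter_not (invSet h) fun p => g⁻¹ p.1 < g⁻¹ p.2]
  congr 1
  · refine Finset.prod_nbij' (fun p => (g⁻¹ p.1, g⁻¹ p.2)) (fun p => (g p.1, g p.2)) ?_ ?_ ?_ ?_ ?_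
    all_goals grind [mem_invSet, Equiv.Perm.mul_apply, Equiv.Perm.inv_def]
  · refine Finset.prod_nbij' (fun p => (g⁻¹ p.2, g⁻¹ p.1)) (fun p => (g p.2, g p.1)) ?_ ?_ ?_ ?_ ?_
    all_goals grind [mem_invSet, Equiv.Perm.mul_apply, Equiv.Perm.inv_def]

theorem prod_invSet_comp {M : Type*} [CommMonoid M] (g : Equiv.Perm (Fin n))
    (f : Fin n → Fin n → M) :
    ∏ p ∈ invSet g, f (g p.1) (g p.2) = ∏ p ∈ invSet g⁻¹, f p.2 p.1 := by
  simpa using prod_invSet_comp_inv g⁻¹ g f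

theorem prod_invSet_inv_mul_prod {M : Type*} [CommMonoid M] (g h : Equiv.Perm (Fin n))
    (f : Fin n → Fin n → M) :
    (∏ p ∈ invSet g⁻¹, f p.1 p.2) * ∏ p ∈ invSet h⁻¹, f (g p.1) (g p.2) =
      (∏ p ∈ invSet g⁻¹ \ invSet (g * h)⁻¹, f p.1 p.2 * f p.2 p.1) *
        ∏ p ∈ invSet (g * h)⁻¹, f p.1 p.2 := by
  have reindex := prod_invSet_comp_inv g⁻¹ h⁻¹ f
  rw [inv_inv, ← mul_inv_rev] at reindex
  rw [reindex, Finset.prod_mul_distrib,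
    ← Finset.prod_inter_mul_prod_sdiff (invSet g⁻¹) (invSet (g * h)⁻¹),
    ← Finset.prod_inter_mul_prod_sdiff (invSet (g * h)⁻¹) (invSet g⁻¹),
    Finset.inter_comm (invSet (g * h)⁻¹)]
  ac_rfl

variable (q : Fin n → Fin n → ℂ)

theorem twistMat_apply (g σ τ : Equiv.Perm (Fin n)) :
    twistMat n q g σ τ = if τ = σ * g then ∏ p ∈ invSet g⁻¹, q (σ p.1) (σ p.2) else 0 := by
  have index_iff : σ = τ * g⁻¹ ↔ τ = σ * g := by rw [eq_mul_inv_iff_mul_eq, eq_comm]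
  simp only [twistMat, index_iff]
  split_ifs with hτ
  · simpa [hτ] using prod_invSet_comp g fun a b => q (σ b) (σ a)
  · rfl

/-- The diagonal matrix `N(g, h)` measuring the failure of `M_q` to be multiplicative:
`M_q(g) M_q(h) = N(g, h) M_q(gh)`, see `twistMat_mul`. -/
def twistCocycle (g h : Equiv.Perm (Fin n)) : PermMatrix n :=
  Matrix.diagonal fun σ => ∏ p ∈ invSet g⁻¹ \ invSet (g * h)⁻¹,
    q (σ p.1) (σ p.2) * q (σ p.2) (σ p.1)

theorem twistMat_mul (g h : Equiv.Perm (Fin n)) :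
    twistMat n q g * twistMat n q h = twistCocycle q g h * twistMat n q (g * h) := by
  ext σ τ
  rw [twistCocycle, Matrix.diagonal_mul, Matrix.mul_apply, Finset.sum_eq_single (σ * g)]
  · simp only [twistMat_apply, if_true, mul_ite, mul_zero, mul_assoc]
    split_ifs
    · exact prod_invSet_inv_mul_prod g h fun a b => q (σ a) (σ b)
    · rfl
  · intro ρ _ hρ
    simp [twistMat_apply, hρ]
  · simp

@[simp]
theorem twistMat_one : twistMat n q 1 = 1 := by
  ext σ τ
  simp [twistMat, Matrix.one_apply]

variable {q}

theorem twistCocycle_eq_one_of_subset {g h : Equiv.Perm (Fin n)}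
    (hgh : invSet g⁻¹ ⊆ invSet (g * h)⁻¹) : twistCocycle q g h = 1 := by
  simp only [twistCocycle, Finset.sdiff_eq_empty_iff_subset.2 hgh, Finset.prod_empty,
    Matrix.diagonal_one]

theorem twistCocycle_eq_Dmat {g h : Equiv.Perm (Fin n)} {a : Fin n}
    (hgh : invSet g⁻¹ \ invSet (g * h)⁻¹ = {(a, finSucc a)}) :
    twistCocycle q g h = Dmat n q a := by
  simp only [twistCocycle, Dmat, hgh, Finset.prod_singleton]

end TwistMat

section Cycles

variable {n : ℕ}

theorem covBy_finSucc {a : Fin n} (ha : (a : ℕ) + 1 < n) : a ⋖ finSucc a :=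
  covBy_iff_val_add_one_eq.2 (Nat.mod_eq_of_lt ha).symm

theorem IsTCycle.le {a b : Fin n} {s : Equiv.Perm (Fin n)} (h : IsTCycle a b s) : a ≤ b := by
  by_contra hab
  exact hab ((h.2.1.symm.trans (h.2.2 b fun hb => hab hb.1)).le)

theorem IsTCycle.val_apply {a b : Fin n} {s : Equiv.Perm (Fin n)} (h : IsTCycle a b s)
    (i : Fin n) :
    (s i : ℕ) = if a ≤ i ∧ i < b then (i : ℕ) + 1 else if i = b then (a : ℕ) else i := by
  obtain ⟨shift, last, fixed⟩ := h
  split_ifs with hi hib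
  · exact shift i hi.1 hi.2
  · rw [hib, last]
  · rw [fixed i fun ⟨hai, hib'⟩ => hi ⟨hai, lt_of_le_of_ne hib' hib⟩]

theorem IsTCycle.eq_one {a : Fin n} {s : Equiv.Perm (Fin n)} (h : IsTCycle a a s) : s = 1 := by
  ext i
  rw [h.val_apply, Equiv.Perm.one_apply]
  grind

theorem IsTCycle.val_inv_apply {a b : Fin n} {s : Equiv.Perm (Fin n)} (h : IsTCycle a b s)
    (i : Fin n) :
    (s⁻¹ i : ℕ) = if i = a then (b : ℕ) else if a < i ∧ i ≤ b then (i : ℕ) - 1 else i := by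
  obtain ⟨x, rfl⟩ := s.surjective i
  have hab := h.le
  have hx := h.val_apply x
  rw [Equiv.Perm.inv_def, Equiv.symm_apply_apply]
  grind

theorem IsTCycle.invSet_inv {a b : Fin n} {s : Equiv.Perm (Fin n)} (h : IsTCycle a b s) :
    invSet s⁻¹ = {a} ×ˢ Finset.Ioc a b := by
  have hab := h.le
  ext ⟨x, y⟩
  have hx := h.val_inv_apply x
  have hy := h.val_inv_apply y
  simp only [mem_invSet, Finset.mem_product, Finset.mem_singleton, Finset.mem_Ioc]
  grind

variable {t : Fin n → Fin n → Equiv.Perm (Fin n)}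
  (ht : ∀ a b : Fin n, a ≤ b → IsTCycle a b (t b a)) {k k' p m j : Fin n}

include ht

theorem tCycle_mul_tCycle (hk : k ⋖ k') (hm : p ⋖ m) (hkp : k ≤ p) (hpj : p < j) :
    t m k * t j k = t j k' * t p k := by
  have hkk' := covBy_iff_val_add_one_eq.1 hk
  have hpm := covBy_iff_val_add_one_eq.1 hm
  ext i
  have val_m := (ht k m (by grind)).val_apply (t j k i)
  have val_j := (ht k j (by grind)).val_apply i
  have val_j' := (ht k' j (by grind)).val_apply (t p k i)
  have val_p := (ht k p hkp).val_apply i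
  rw [Equiv.Perm.mul_apply, Equiv.Perm.mul_apply]
  grind

theorem val_tCycle_mul_tCycle_inv_apply (hk : k ⋖ k') (hkp : k ≤ p) (hpj : p < j) (i : Fin n) :
    ((t j k' * t p k)⁻¹ i : ℕ) =
      if i = k then (p : ℕ) else if i = k' then (j : ℕ) else
        if k < i ∧ (i : ℕ) ≤ p + 1 then (i : ℕ) - 2 else
          if k < i ∧ i ≤ j then (i : ℕ) - 1 else i := by
  have hkk' := covBy_iff_val_add_one_eq.1 hk
  have val_j' := (ht k' j (by grind)).val_inv_apply i
  have val_p := (ht k p hkp).val_inv_apply ((t j k')⁻¹ i)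
  rw [mul_inv_rev, Equiv.Perm.mul_apply, val_p]
  grind

theorem invSet_tCycle_inv_sdiff (hk : k ⋖ k') (hm : p ⋖ m) (hkp : k ≤ p) (hpj : p < j) :
    invSet (t m k)⁻¹ \ invSet (t j k' * t p k)⁻¹ = {(k, k')} := by
  have hkk' := covBy_iff_val_add_one_eq.1 hk
  have hpm := covBy_iff_val_add_one_eq.1 hm
  rw [(ht k m (by grind)).invSet_inv]
  ext ⟨x, y⟩
  have val_x := val_tCycle_mul_tCycle_inv_apply ht hk hkp hpj x
  have val_y := val_tCycle_mul_tCycle_inv_apply ht hk hkp hpj y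
  simp only [Finset.mem_sdiff, Finset.mem_product, Finset.mem_singleton, Finset.mem_Ioc,
    mem_invSet, Prod.mk.injEq]
  -- `k` goes to `p`, `k'` to `j > p`, and every `y` with `k' < y ≤ m` to `y - 2 < p`.
  grind

theorem invSet_tCycle_inv_subset (hk : k ⋖ k') (hkp : k ≤ p) (hpj : p < j) :
    invSet (t j k')⁻¹ ⊆ invSet (t j k' * t p k)⁻¹ := by
  have hkk' := covBy_iff_val_add_one_eq.1 hk
  rw [(ht k' j (by grind)).invSet_inv]
  rintro ⟨x, y⟩
  have val_x := val_tCycle_mul_tCycle_inv_apply ht hk hkp hpj x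
  have val_y := val_tCycle_mul_tCycle_inv_apply ht hk hkp hpj y
  simp only [Finset.mem_product, Finset.mem_singleton, Finset.mem_Ioc, mem_invSet]
  grind

theorem twistMat_tCycle_mul (q : Fin n → Fin n → ℂ) (hk : k ⋖ finSucc k) (hm : p ⋖ m)
    (hkp : k ≤ p) (hpj : p < j) :
    twistMat n q (t m k) * twistMat n q (t j k) =
      Dmat n q k * twistMat n q (t j (finSucc k)) * twistMat n q (t p k) := by
  have hmul := tCycle_mul_tCycle ht hk hm hkp hpj
  have hD : twistCocycle q (t m k) (t j k) = Dmat n q k :=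
    twistCocycle_eq_Dmat (hmul ▸ invSet_tCycle_inv_sdiff ht hk hm hkp hpj)
  rw [twistMat_mul, hD, hmul, mul_assoc, twistMat_mul q (t j (finSucc k)),
    twistCocycle_eq_one_of_subset (invSet_tCycle_inv_subset ht hk hkp hpj), one_mul]

end Cycles

/-- The matrix form of the factorization `β*_{n-k+1} · γ*_{n-k+1} = δ*_{n-k+1}` in the
twisted group algebra `A(S_n)`: for `1 ≤ k ≤ n-1`,
`(∑_{m=k}^{n} M_q(t_{m,k})) · (I − M_q(t_{n,k})) ⋯ (I − M_q(t_{k+1,k}))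
 = (I − D_k·M_q(t_{n,k+1})) ⋯ (I − D_k·M_q(t_{k+2,k+1})) · (I − D_k)`,
the factors being multiplied in the displayed (decreasing) order. -/
theorem beta_gamma_delta_factorization (n : ℕ) (hn : 1 ≤ n) (q : Fin n → Fin n → ℂ)
    (t : Fin n → Fin n → Equiv.Perm (Fin n))
    (ht : ∀ a b : Fin n, a ≤ b → IsTCycle a b (t b a))
    (k : Fin n) (hk : (k : ℕ) + 1 < n) :
    (∑ m ∈ Finset.Ici k, twistMat n q (t m k)) *
        (((List.finRange n).filter fun m => decide (k < m)).reverse.map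
          fun m => (1 : PermMatrix n) - twistMat n q (t m k)).prod =
      ((((List.finRange n).filter fun m => decide (finSucc k < m)).reverse.map
          fun m => (1 : PermMatrix n) - Dmat n q k * twistMat n q (t m (finSucc k))).prod) *
        ((1 : PermMatrix n) - Dmat n q k) := by
  have hcov : k ⋖ finSucc k := covBy_finSucc hk
  have cycle_self (a : Fin n) : twistMat n q (t a a) = 1 := by
    rw [(ht a a le_rfl).eq_one, twistMat_one]
  rw [sum_Ici_mul_prod_one_sub
    (U := fun j => Dmat n q k * twistMat n q (t j (finSucc k))) (cycle_self k)
    fun p m j hkp hpm hpj => twistMat_tCycle_mul ht q hcov hpm hkp hpj]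
  rw [filter_lt_finRange_eq_cons hcov, List.reverse_cons, List.map_append, List.prod_append]
  simp only [List.map_singleton, List.prod_singleton, cycle_self, mul_one]
end

section
/- For every k with 1 ≤ k ≤ n−1, the determinant of the matrix B_{Q,n−k+1} := ∑_{m=k}^{n} M_q(t_{m,k}) factors as det B_{Q,n−k+1} = ∏_{m=2}^{n−k+1} ∏_{T} (1 − σ_T)^{(m−2)!·(n−m)!}, where the inner product runs over all subsets T ⊆ Fin n of cardinality m. (For k = 1 this gives the determinant of the matrix of the multidegree operator ∂^Q on a generic weight subspace of the free associative algebra.) -/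
/-- `σ_T = ∏_{i,j ∈ T, i ≠ j} q i j`, the product over all ordered pairs of distinct
elements of `T`. -/
def sigmaT {n : ℕ} (q : Fin n → Fin n → ℂ) (T : Finset (Fin n)) : ℂ :=
  ∏ p ∈ (T ×ˢ T).filter fun p => p.1 ≠ p.2, q p.1 p.2

/-!
Write `A m = M_q(t_{m,k})` and `S j = ∑_{k ≤ m ≤ j} A m`. There is a weighted permutation matrix
`D j`, carried by the cycle `t_{j,k+1}`, with `A (m + 1) * A j = D j * A m` for `k ≤ m < j`. As
`A k = 1`, summing over `m` gives `S j * (1 - A j) = (1 - D j) * S (j - 1)`.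

If `W` is a weighted permutation matrix, `det (1 - W)` is a product over the orbits of the
permutation. For `A j` and `D j` the product of the weights along an orbit is `σ_T`, where `T` is
the image of `{k, …, j}`, but the orbits have lengths `j - k + 1` and `j - k`. Hence, with
`F = ∏_T (1 - σ_T) ^ ((j - k - 1)! * (n - (j - k + 1))!)` over the `T` with `j - k + 1` elements,
`det (1 - A j) = F ^ (j - k)` and `det (1 - D j) = F ^ (j - k + 1)`. If `F` can be cancelled, then
`det (S j) = F * det (S (j - 1))`; this is the case when the parameters are independent
indeterminates, and the general identity follows by specialisation.
-/

open Finset Equiv Matrix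
open scoped Pointwise nonZeroDivisors

theorem sum_Ioc_eq_sum_Ico_succ {ι M : Type*} [LinearOrder ι] [LocallyFiniteOrder ι] [SuccOrder ι]
    [PredOrder ι] [AddCommMonoid M] (f : ι → M) (a b : ι) :
    ∑ i ∈ Ioc a b, f i = ∑ i ∈ Ico a b, f (Order.succ i) := by
  symm
  refine sum_nbij' Order.succ Order.pred ?_ ?_ ?_ ?_ fun _ _ => rfl
  · intro i hi
    rw [mem_Ico] at hi
    exact mem_Ioc.mpr
      ⟨Order.lt_succ_of_le_of_not_isMax hi.1 hi.2.not_isMax, Order.succ_le_of_lt hi.2⟩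
  · intro i hi
    rw [mem_Ioc] at hi
    exact mem_Ico.mpr
      ⟨Order.le_pred_of_lt hi.1, Order.pred_lt_of_le_of_not_isMin hi.2 hi.1.not_isMin⟩
  · intro i hi
    exact Order.pred_succ_of_not_isMax (mem_Ico.mp hi).2.not_isMax
  · intro i hi
    exact Order.succ_pred_of_not_isMin (mem_Ioc.mp hi).1.not_isMin

section WeightedTranslation

theorem det_one_sub_cyclicShift {R : Type*} [CommRing R] {L : ℕ} [NeZero L] (w : Fin L → R) :
    (1 - Matrix.of fun i j : Fin L => if j = i + 1 then w j else 0).det = 1 - ∏ i, w i := by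
  obtain _ | l := L
  · exact (NeZero.ne 0 rfl).elim
  let B : Matrix (Fin (l + 1)) (Fin (l + 1)) R :=
    1 - Matrix.of fun i j => if i = Fin.last l then ∏ p ∈ Iic j, w p else 0
  have hB : B.IsLowerTriangular := by
    intro i j hij
    have hi : i ≠ Fin.last l := ((show i < j from hij).trans_le j.le_last).ne
    simp [B, hi, (show i < j from hij).ne]
  calc
    _ = B.det := by
      symm
      refine det_eq_of_forall_col_eq_smul_add_pred (fun j => w j.succ) (fun i => ?_)
        fun i j => ?_
      · have h : 0 = i + 1 ↔ i = Fin.last l := by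
          rw [← Fin.last_add_one, add_left_inj, eq_comm]
        have h0 : Iic (0 : Fin (l + 1)) = {0} := by ext; simp
        simp [B, h, h0]
      · have h : j.succ = i + 1 ↔ i = j.castSucc := by
          rw [← Fin.coeSucc_eq_succ, add_left_inj, eq_comm]
        have hIic : Iic j.succ = insert j.succ (Iic j.castSucc) := by
          ext p
          simp only [mem_Iic, mem_insert, Fin.le_def, Fin.ext_iff, Fin.val_succ, Fin.val_castSucc]
          omega
        have hj : j.succ ∉ Iic j.castSucc := by simp
        simp only [B, Matrix.sub_apply, of_apply, h, hIic, prod_insert hj, one_apply]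
        split_ifs <;> ring
    _ = ∏ i, B i i := det_of_isLowerTriangular B hB
    _ = 1 - ∏ i, w i := by
      have hIic : Iic (Fin.last l) = univ := by ext; simp [Fin.le_last]
      rw [Fin.prod_univ_castSucc]
      simp [B, hIic, Fin.castSucc_ne_last]

variable {G : Type*} [Group G]

theorem bijective_pow_mul_out [Finite G] (g : G) :
    Function.Bijective fun p : Fin (orderOf g) × (G ⧸ Subgroup.zpowers g) =>
      p.2.out * g ^ (p.1 : ℕ) := by
  rw [Nat.bijective_iff_injective_and_card]
  constructor
  · rintro ⟨i, x⟩ ⟨j, y⟩ h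
    have hmk (z : G ⧸ Subgroup.zpowers g) (m : ℕ) :
        ((z.out * g ^ m : G) : G ⧸ Subgroup.zpowers g) = z := by
      rw [QuotientGroup.mk_mul_of_mem _ (Subgroup.npow_mem_zpowers g m), QuotientGroup.out_eq']
    obtain rfl : x = y := by rw [← hmk x i, ← hmk y j]; exact congrArg _ h
    exact Prod.ext (Fin.ext (pow_injOn_Iio_orderOf i.2 j.2 (mul_left_cancel h))) rfl
  · rw [Nat.card_prod, Nat.card_fin, ← Nat.card_zpowers, mul_comm,
      ← Subgroup.card_eq_card_quotient_mul_card_subgroup]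

/-- Each element of `G` is uniquely a chosen coset representative times a power `g ^ i` with
`i < orderOf g`. -/
noncomputable def cosetPowEquiv [Finite G] (g : G) :
    Fin (orderOf g) × (G ⧸ Subgroup.zpowers g) ≃ G :=
  Equiv.ofBijective _ (bijective_pow_mul_out g)

variable [DecidableEq G] {R : Type*} [CommRing R]

/-- The matrix of the right translation by `g` weighted by `w`: it sends the basis vector `τ` to
`w τ` times the basis vector `τ * g⁻¹`. -/
def weightedTranslation (g : G) (w : G → R) : Matrix G G R :=
  Matrix.of fun σ τ => if σ = τ * g⁻¹ then w τ else 0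

theorem weightedTranslation_one : weightedTranslation (1 : G) (1 : G → R) = 1 := by
  ext σ τ
  simp [weightedTranslation, one_apply]

theorem weightedTranslation_mul [Fintype G] (g h : G) (v w : G → R) :
    weightedTranslation g v * weightedTranslation h w =
      weightedTranslation (g * h) fun τ => v (τ * h⁻¹) * w τ := by
  ext σ τ
  simp [weightedTranslation, mul_apply, mul_assoc]

theorem map_weightedTranslation {S : Type*} [CommRing S] (f : R →+* S) (g : G) (w : G → R) :
    (weightedTranslation g w).map f = weightedTranslation g (f ∘ w) := by
  ext σ τ
  simp [weightedTranslation, apply_ite f]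

theorem det_one_sub_weightedTranslation [Fintype G] (g : G)
    [Fintype (G ⧸ Subgroup.zpowers g)] (w : G → R) :
    (1 - weightedTranslation g w).det =
      ∏ x : G ⧸ Subgroup.zpowers g, (1 - ∏ i ∈ range (orderOf g), w (x.out * g ^ i)) := by
  classical
  have : NeZero (orderOf g) := ⟨(orderOf_pos g).ne'⟩
  let e := cosetPowEquiv g
  have e_succ (i : Fin (orderOf g)) (x : G ⧸ Subgroup.zpowers g) : e (i, x) * g = e (i + 1, x) := by
    simp [e, cosetPowEquiv, Fin.val_add, mul_assoc, ← pow_succ]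
  have hblock : (1 - weightedTranslation g w).submatrix e e = blockDiagonal fun x =>
      1 - Matrix.of fun i j => if j = i + 1 then w (e (j, x)) else 0 := by
    ext ⟨i, x⟩ ⟨j, y⟩
    have hentry : e (i, x) = e (j, y) * g⁻¹ ↔ x = y ∧ j = i + 1 := by
      rw [eq_mul_inv_iff_mul_eq, e_succ, e.apply_eq_iff_eq, Prod.mk.injEq, and_comm,
        eq_comm (a := j)]
    obtain rfl | hxy := eq_or_ne x y
    · simp [weightedTranslation, hentry, one_apply]
    · simp [weightedTranslation, hentry, hxy, blockDiagonal_apply]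
  rw [← det_submatrix_equiv_self e, hblock, det_blockDiagonal]
  refine prod_congr rfl fun x _ => ?_
  rw [det_one_sub_cyclicShift, ← Fin.prod_univ_eq_prod_range fun i => w (x.out * g ^ i)]
  rfl

theorem det_one_sub_weightedTranslation_of_invariant [Fintype G] {Y : Type*} [DecidableEq Y]
    (g : G) (w : G → R) (φ : G → Y) (hφ : ∀ τ, φ (τ * g) = φ τ) (f : Y → R)
    (hw : ∀ τ, ∏ i ∈ range (orderOf g), w (τ * g ^ i) = f (φ τ)) (S : Finset Y)
    (hS : ∀ τ, φ τ ∈ S) (c : ℕ) (hc : ∀ y ∈ S, #{τ | φ τ = y} = c * orderOf g) :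
    (1 - weightedTranslation g w).det = ∏ y ∈ S, (1 - f y) ^ c := by
  classical
  have := Fintype.ofFinite (G ⧸ Subgroup.zpowers g)
  have hpow (τ : G) (i : ℕ) : φ (τ * g ^ i) = φ τ := by
    induction i with
    | zero => simp
    | succ i ih => rw [pow_succ, ← mul_assoc, hφ, ih]
  have hcosets (y : Y) (hy : y ∈ S) : #{x : G ⧸ Subgroup.zpowers g | φ x.out = y} = c := by
    refine Nat.eq_of_mul_eq_mul_right (orderOf_pos g) ?_
    rw [← hc y hy, mul_comm, ← card_fin (orderOf g), ← card_product]
    refine card_equiv (cosetPowEquiv g) fun p => ?_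
    simp [cosetPowEquiv, hpow]
  rw [det_one_sub_weightedTranslation,
    ← prod_fiberwise_of_maps_to (g := fun x : G ⧸ Subgroup.zpowers g => φ x.out)
      fun x _ => hS x.out]
  refine prod_congr rfl fun y hy => ?_
  rw [← hcosets y hy]
  exact prod_eq_pow_card fun x hx => by rw [hw, (mem_filter.mp hx).2]

end WeightedTranslation

section Cycles

variable {α : Type*}

theorem card_filter_smul_finset_eq [Fintype α] [DecidableEq α] (P T : Finset α) (h : #T = #P) :
    #{τ : Perm α | τ • P = T} = (#P).factorial * (Fintype.card α - #P).factorial := by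
  obtain ⟨g, rfl⟩ : ∃ g : Perm α, g • P = T := by
    refine ⟨(Finset.equivOfCardEq h.symm).extendSubtype, eq_of_subset_of_card_le ?_ ?_⟩
    · rw [smul_finset_def, image_subset_iff]
      exact fun x hx => Equiv.extendSubtype_mem _ x hx
    · rw [card_smul_finset, h]
  have hstab : #{τ : Perm α | τ • P = g • P} =
      Fintype.card {τ : Perm α // (fun x => decide (x ∈ P)) ∘ τ = fun x => decide (x ∈ P)} := by
    rw [Fintype.card_subtype]
    refine card_equiv (Equiv.mulLeft g⁻¹) fun τ => ?_
    simp only [mem_filter_univ, coe_mulLeft]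
    rw [← inv_smul_eq_iff, smul_smul, ← MulAction.mem_stabilizer_iff,
      MulAction.mem_stabilizer_finset]
    simp [funext_iff, Perm.smul_def]
  rw [hstab, DomMulAct.stabilizer_card, Fintype.prod_bool]
  simp [Fintype.card_subtype, ← card_compl, compl_eq_univ_sdiff, filter_not]

variable {t : Perm α} {s : Finset α}

theorem orderOf_eq_card_of_isCycleOn (ht : t.IsCycleOn (s : Set α)) (hsupp : ∀ x ∉ s, t x = x)
    (hs : s.Nonempty) : orderOf t = #s := by
  obtain ⟨a, ha⟩ := hs
  refine Nat.dvd_antisymm (orderOf_dvd_of_pow_eq_one ?_) ?_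
  · ext x
    by_cases hx : x ∈ s
    · exact ht.pow_card_apply hx
    · exact Perm.pow_apply_eq_self_of_apply_eq_self (hsupp x hx) _
  · rw [← ht.pow_apply_eq ha, pow_orderOf_eq_one, Perm.one_apply]

theorem prod_range_card_pow_apply {M : Type*} [CommMonoid M] (ht : t.IsCycleOn (s : Set α)) {a : α}
    (ha : a ∈ s) (f : α → M) : ∏ i ∈ range #s, f ((t ^ i) a) = ∏ x ∈ s, f x := by
  refine prod_nbij (fun i => (t ^ i) a) (fun i _ => ht.1.mapsTo.perm_pow i ha) ?_ ?_ fun _ _ => rfl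
  · intro i hi j hj hij
    exact ((ht.pow_apply_eq_pow_apply ha).mp hij).eq_of_lt_of_lt
      (mem_range.mp hi) (mem_range.mp hj)
  · intro x hx
    obtain ⟨i, hi, rfl⟩ := ht.exists_pow_eq ha hx
    exact ⟨i, mem_range.mpr hi, rfl⟩

theorem prod_range_card_prod_erase_pow_apply [DecidableEq α] {M : Type*} [CommMonoid M]
    (ht : t.IsCycleOn (s : Set α)) {a : α} (ha : a ∈ s) (f : α → α → M) :
    ∏ i ∈ range #s, ∏ x ∈ s.erase a, f ((t ^ i) a) ((t ^ i) x) =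
      ∏ x ∈ s, ∏ y ∈ s.erase x, f x y := by
  rw [← prod_range_card_pow_apply ht ha]
  refine prod_congr rfl fun i _ => prod_equiv (t ^ i) (fun x => ?_) fun _ _ => rfl
  have hs : (t ^ i) x ∈ s ↔ x ∈ s := by
    conv_lhs =>
      rw [← mem_coe, ← (ht.1.perm_pow i).image_eq, (t ^ i).injective.mem_set_image, mem_coe]
  rw [mem_erase, mem_erase, hs, (t ^ i).injective.ne_iff]

end Cycles

section CycleIcc

variable {n : ℕ} {a b : Fin n}

theorem val_cycleIcc (h : a ≤ b) (i : Fin n) :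
    (Fin.cycleIcc a b i : ℕ) =
      if a ≤ i ∧ i < b then (i : ℕ) + 1 else if i = b then (a : ℕ) else i := by
  have : NeZero n := ⟨a.pos.ne'⟩
  obtain hia | hai := lt_or_ge i a
  · simp [Fin.cycleIcc_of_lt hia, hia.not_ge, (hia.trans_le h).ne]
  obtain hib | rfl | hbi := lt_trichotomy i b
  · simp [Fin.cycleIcc_of_ge_of_lt hai hib, hai, hib, Fin.val_add_one_of_lt' (i := i) (by lia)]
  · simp [Fin.cycleIcc_of_last h]
  · simp [Fin.cycleIcc_of_gt hbi, hbi.not_gt, hbi.ne']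

theorem IsTCycle.eq_cycleIcc (h : a ≤ b) {t : Perm (Fin n)} (ht : IsTCycle a b t) :
    t = Fin.cycleIcc a b := by
  obtain ⟨hmid, hlast, hout⟩ := ht
  ext i
  rw [val_cycleIcc h]
  split_ifs with h1 h2
  · exact hmid i h1.1 h1.2
  · rw [h2, hlast]
  · rw [hout i (by grind)]

theorem isCycleOn_cycleIcc (h : a ≤ b) :
    (Fin.cycleIcc a b).IsCycleOn (Icc a b : Finset (Fin n)) := by
  have : NeZero n := ⟨a.pos.ne'⟩
  obtain rfl | hab := h.eq_or_lt
  · rw [Icc_self, coe_singleton, Perm.isCycleOn_singleton, Fin.cycleIcc_of_last h]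
  convert! (Fin.isCycle_cycleIcc hab).isCycleOn
  ext i
  have := val_cycleIcc h i
  simp only [coe_Icc, Set.mem_Icc, Set.mem_ofPred_eq, Ne, Fin.ext_iff, Fin.le_def] at *
  grind

theorem cycleIcc_apply_of_notMem {i : Fin n} (hi : i ∉ Icc a b) : Fin.cycleIcc a b i = i := by
  obtain h | h : i < a ∨ b < i := by grind
  · exact Fin.cycleIcc_of_lt h
  · exact Fin.cycleIcc_of_gt h

theorem orderOf_cycleIcc (h : a ≤ b) : orderOf (Fin.cycleIcc a b) = b + 1 - a := by
  rw [orderOf_eq_card_of_isCycleOn (isCycleOn_cycleIcc h) (fun _ => cycleIcc_apply_of_notMem)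
    (nonempty_Icc.mpr h), Fin.card_Icc]

theorem cycleIcc_smul_Icc {l j k : Fin n} (hkl : k ≤ l) (hlj : l ≤ j) :
    Fin.cycleIcc l j • Icc k j = Icc k j := by
  rw [← MulAction.mem_stabilizer_iff, MulAction.mem_stabilizer_finset]
  intro i
  have := val_cycleIcc hlj i
  simp only [Perm.smul_def, mem_Icc]
  grind

theorem val_succ_of_lt {k j : Fin n} (h : k < j) : ((Order.succ k : Fin n) : ℕ) = k + 1 :=
  (Nat.covBy_iff_add_one_eq.mp
    (Fin.covBy_iff.mp (Order.covBy_succ_of_not_isMax h.not_isMax))).symm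

theorem cycleIcc_succ_right_mul_cycleIcc {k m j : Fin n} (hkm : k ≤ m) (hmj : m < j) :
    Fin.cycleIcc k (Order.succ m) * Fin.cycleIcc k j =
      Fin.cycleIcc (Order.succ k) j * Fin.cycleIcc k m := by
  ext i
  have hk := val_succ_of_lt (hkm.trans_lt hmj)
  have hm := val_succ_of_lt hmj
  have h1 := val_cycleIcc (hkm.trans hmj.le) i
  have h2 := val_cycleIcc hkm i
  have h3 := val_cycleIcc (hkm.trans (Order.le_succ m)) (Fin.cycleIcc k j i)
  have h4 := val_cycleIcc (Order.succ_le_of_lt (hkm.trans_lt hmj)) (Fin.cycleIcc k m i)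
  rw [Perm.mul_apply, Perm.mul_apply]
  simp only [Fin.ext_iff, Fin.le_def, Fin.lt_def] at *
  split_ifs at * <;> omega

end CycleIcc

section TwistMatrix

variable {R : Type*} [CommRing R] {n : ℕ}

/-- The entry `∏_{(a,b) ∈ I(g)} q (τ b) (τ a)` of `M_q(g)` in column `τ` and row `τ * g⁻¹`. -/
def twistWeight (q : Fin n → Fin n → R) (g τ : Perm (Fin n)) : R :=
  ∏ p ∈ invSet g, q (τ p.2) (τ p.1)

/-- The matrix `M_q(g)` over an arbitrary commutative ring; over `ℂ` it is definitionally
`twistMat`. -/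
def twistMatrix (q : Fin n → Fin n → R) (g : Perm (Fin n)) :
    Matrix (Perm (Fin n)) (Perm (Fin n)) R :=
  weightedTranslation g (twistWeight q g)

/-- The product `σ_T` over an arbitrary commutative ring. -/
def pairProd (q : Fin n → Fin n → R) (T : Finset (Fin n)) : R :=
  ∏ p ∈ T.offDiag, q p.1 p.2

/-- The weight of the cycle `t_{j,k+1}` in the relation
`M_q(t_{m+1,k}) M_q(t_{j,k}) = augmentedTwistMatrix q k j * M_q(t_{m,k})`. -/
def augmentedTwistWeight (q : Fin n → Fin n → R) (k j : Fin n) (τ : Perm (Fin n)) : R :=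
  q (τ k) (τ j) * q (τ j) (τ k) * twistWeight q (Fin.cycleIcc (Order.succ k) j) τ

/-- The matrix `M_q(t_{j,k+1})` with the weight of column `τ` multiplied by
`q (τ k) (τ j) * q (τ j) (τ k)`. -/
def augmentedTwistMatrix (q : Fin n → Fin n → R) (k j : Fin n) :
    Matrix (Perm (Fin n)) (Perm (Fin n)) R :=
  weightedTranslation (Fin.cycleIcc (Order.succ k) j) (augmentedTwistWeight q k j)

/-- The factor of the determinant contributed by the subsets of cardinality `m`. -/
def subsetFactor (q : Fin n → Fin n → R) (m : ℕ) : R :=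
  ∏ T ∈ powersetCard m (univ : Finset (Fin n)),
    (1 - pairProd q T) ^ ((m - 2).factorial * (n - m).factorial)

theorem sigmaT_eq_pairProd (q : Fin n → Fin n → ℂ) : sigmaT q = pairProd q := by
  funext T
  exact prod_congr (by ext; simp [and_assoc]) fun _ _ => rfl

theorem invSet_cycleIcc {a b : Fin n} (h : a ≤ b) :
    invSet (Fin.cycleIcc a b) = Ico a b ×ˢ {b} := by
  ext ⟨x, y⟩
  have hx := val_cycleIcc h x
  have hy := val_cycleIcc h y
  simp only [invSet, mem_filter_univ, mem_product, mem_Ico, mem_singleton, Fin.lt_def,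
    Fin.le_def, Fin.ext_iff] at *
  split_ifs at * <;> omega

variable (q : Fin n → Fin n → R)

theorem twistWeight_cycleIcc {a b : Fin n} (h : a ≤ b) (τ : Perm (Fin n)) :
    twistWeight q (Fin.cycleIcc a b) τ = ∏ i ∈ Ico a b, q (τ b) (τ i) := by
  rw [twistWeight, invSet_cycleIcc h, prod_product]
  simp only [prod_singleton]

theorem twistMatrix_cycleIcc_self (k : Fin n) : twistMatrix q (Fin.cycleIcc k k) = 1 := by
  have : NeZero n := ⟨k.pos.ne'⟩
  rw [← weightedTranslation_one, twistMatrix]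
  congr 1
  · exact Fin.cycleIcc_eq
  · ext τ
    rw [twistWeight_cycleIcc q le_rfl, Ico_self, prod_empty, Pi.one_apply]

theorem pairProd_insert {a : Fin n} {s : Finset (Fin n)} (ha : a ∉ s) :
    pairProd q (insert a s) = (∏ x ∈ s, q a x * q x a) * pairProd q s := by
  rw [pairProd, offDiag_insert ha, prod_union, prod_union, prod_mul_distrib, prod_product,
    prod_product]
  · simp only [prod_singleton]
    rw [pairProd]
    ring
  all_goals
    rw [disjoint_left]
    rintro ⟨x, y⟩
    simp only [mem_union, mem_offDiag, mem_product, mem_singleton]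
    grind

theorem pairProd_smul (τ : Perm (Fin n)) (s : Finset (Fin n)) :
    pairProd q (τ • s) = ∏ x ∈ s, ∏ y ∈ s.erase x, q (τ x) (τ y) := by
  rw [← prod_finset_product' s.offDiag s (fun x => s.erase x) fun p => by
    rw [mem_offDiag, mem_erase]
    tauto]
  refine (prod_equiv (τ.prodCongr τ) (fun p => ?_) fun _ _ => rfl).symm
  simp only [mem_offDiag, prodCongr_apply, Prod.map_fst, Prod.map_snd,
    ← Perm.smul_def (f := τ), smul_mem_smul_finset_iff, (MulAction.injective τ).ne_iff]

theorem prod_range_orderOf_twistWeight {a b : Fin n} (h : a ≤ b) (τ : Perm (Fin n)) :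
    ∏ i ∈ range (orderOf (Fin.cycleIcc a b)),
        twistWeight q (Fin.cycleIcc a b) (τ * Fin.cycleIcc a b ^ i) =
      pairProd q (τ • Icc a b) := by
  have hc := isCycleOn_cycleIcc h
  rw [orderOf_eq_card_of_isCycleOn hc (fun _ => cycleIcc_apply_of_notMem) (nonempty_Icc.mpr h),
    pairProd_smul, ← prod_range_card_prod_erase_pow_apply hc (right_mem_Icc.mpr h), Icc_erase_right]
  simp only [twistWeight_cycleIcc q h, Perm.mul_apply]

theorem prod_range_orderOf_augmentedTwistWeight {k j : Fin n} (h : k < j) (τ : Perm (Fin n)) :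
    ∏ i ∈ range (orderOf (Fin.cycleIcc (Order.succ k) j)),
        augmentedTwistWeight q k j (τ * Fin.cycleIcc (Order.succ k) j ^ i) =
      pairProd q (τ • Icc k j) := by
  have hl := Order.succ_le_of_lt h
  have hk : k ∉ Icc (Order.succ k) j := fun hmem =>
    (Order.lt_succ_of_not_isMax h.not_isMax).not_ge (mem_Icc.mp hmem).1
  have hfix (i : ℕ) : (Fin.cycleIcc (Order.succ k) j ^ i) k = k :=
    Perm.pow_apply_eq_self_of_apply_eq_self (cycleIcc_apply_of_notMem hk) i
  have hc := isCycleOn_cycleIcc hl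
  have hpair : ∏ i ∈ range (orderOf (Fin.cycleIcc (Order.succ k) j)),
      (q ((τ * Fin.cycleIcc (Order.succ k) j ^ i) k) ((τ * Fin.cycleIcc (Order.succ k) j ^ i) j) *
        q ((τ * Fin.cycleIcc (Order.succ k) j ^ i) j) ((τ * Fin.cycleIcc (Order.succ k) j ^ i) k)) =
      ∏ x ∈ τ • Icc (Order.succ k) j, q (τ k) x * q x (τ k) := by
    rw [orderOf_eq_card_of_isCycleOn hc (fun _ => cycleIcc_apply_of_notMem) (nonempty_Icc.mpr hl)]
    simp only [Perm.mul_apply, hfix]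
    rw [prod_range_card_pow_apply hc (right_mem_Icc.mpr hl) fun x => q (τ k) (τ x) * q (τ x) (τ k)]
    rw [smul_finset_def, prod_image (MulAction.injective τ).injOn]
    rfl
  simp only [augmentedTwistWeight]
  rw [prod_mul_distrib, prod_range_orderOf_twistWeight q hl, hpair,
    ← insert_Icc_succ_left_eq_Icc h.le, smul_finset_insert, Perm.smul_def, pairProd_insert]
  rwa [← Perm.smul_def, smul_mem_smul_finset_iff]

end TwistMatrix

section Determinants

variable {R : Type*} [CommRing R] {n : ℕ} (q : Fin n → Fin n → R)

theorem det_one_sub_weightedTranslation_cycleIcc {k l j : Fin n} (hkl : k ≤ l) (hlj : l ≤ j)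
    (w : Perm (Fin n) → R)
    (hw : ∀ τ, ∏ i ∈ range (orderOf (Fin.cycleIcc l j)), w (τ * Fin.cycleIcc l j ^ i) =
      pairProd q (τ • Icc k j)) {c : ℕ}
    (hc : c * (j + 1 - l) = (j + 1 - k : ℕ).factorial * (n - (j + 1 - k)).factorial) :
    (1 - weightedTranslation (Fin.cycleIcc l j) w).det =
      ∏ T ∈ powersetCard (j + 1 - k) univ, (1 - pairProd q T) ^ c := by
  refine det_one_sub_weightedTranslation_of_invariant (Fin.cycleIcc l j) w (· • Icc k j)
    (fun τ => ?_) (pairProd q) hw _ (fun τ => ?_) c fun T hT => ?_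
  · rw [mul_smul, cycleIcc_smul_Icc hkl hlj]
  · rw [mem_powersetCard_univ, card_smul_finset, Fin.card_Icc]
  · rw [mem_powersetCard_univ, ← Fin.card_Icc] at hT
    rw [card_filter_smul_finset_eq _ _ hT, Fin.card_Icc, Fintype.card_fin, orderOf_cycleIcc hlj, hc]

variable {k j : Fin n}

theorem det_one_sub_twistMatrix_cycleIcc (h : k < j) :
    (1 - twistMatrix q (Fin.cycleIcc k j)).det = subsetFactor q (j + 1 - k) ^ (j - k : ℕ) := by
  obtain ⟨d, hd⟩ : ∃ d, (j : ℕ) = k + d + 1 := Nat.exists_eq_add_of_lt h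
  have hm : (j : ℕ) + 1 - k = d + 2 := by lia
  have hjk : (j : ℕ) - k = d + 1 := by lia
  rw [twistMatrix, det_one_sub_weightedTranslation_cycleIcc q le_rfl h.le _
    (prod_range_orderOf_twistWeight q h.le)
    (c := d.factorial * (n - (j + 1 - k)).factorial * (d + 1))]
  · simp only [subsetFactor, hm, hjk, pow_mul, prod_pow, Nat.add_sub_cancel]
  · rw [hm, Nat.factorial_succ, Nat.factorial_succ]
    ring

theorem det_one_sub_augmentedTwistMatrix (h : k < j) :
    (1 - augmentedTwistMatrix q k j).det = subsetFactor q (j + 1 - k) ^ (j + 1 - k : ℕ) := by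
  obtain ⟨d, hd⟩ : ∃ d, (j : ℕ) = k + d + 1 := Nat.exists_eq_add_of_lt h
  have hm : (j : ℕ) + 1 - k = d + 2 := by lia
  have hl : (j : ℕ) + 1 - (Order.succ k : Fin n) = d + 1 := by rw [val_succ_of_lt h]; lia
  rw [augmentedTwistMatrix, det_one_sub_weightedTranslation_cycleIcc q (Order.le_succ k)
    (Order.succ_le_of_lt h) _ (prod_range_orderOf_augmentedTwistWeight q h)
    (c := d.factorial * (n - (j + 1 - k)).factorial * (d + 2))]
  · simp only [subsetFactor, hm, pow_mul, prod_pow, Nat.add_sub_cancel]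
  · rw [hm, hl, Nat.factorial_succ, Nat.factorial_succ]
    ring

end Determinants

section Relation

variable {R : Type*} [CommRing R] {n : ℕ} (q : Fin n → Fin n → R) {k m j : Fin n}

theorem twistWeight_cycleIcc_succ_mul_inv (hkm : k ≤ m) (hmj : m < j) (τ : Perm (Fin n)) :
    twistWeight q (Fin.cycleIcc k (Order.succ m)) (τ * (Fin.cycleIcc k j)⁻¹) =
      q (τ m) (τ j) * twistWeight q (Fin.cycleIcc k m) τ := by
  have hinv : (Fin.cycleIcc k j)⁻¹ (Order.succ m) = m := by
    rw [Perm.inv_eq_iff_eq, Fin.ext_iff, val_succ_of_lt hmj, val_cycleIcc (hkm.trans hmj.le),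
      if_pos ⟨hkm, hmj⟩]
  have hj : j ∉ Ico k m := by simp [hmj.le]
  rw [twistWeight_cycleIcc q hkm, twistWeight_cycleIcc q (hkm.trans (Order.le_succ m)),
    ← prod_insert (f := fun x => q (τ m) (τ x)) hj]
  simp only [Perm.mul_apply, hinv]
  refine (prod_equiv (Fin.cycleIcc k j) (fun x => ?_) fun _ _ => by simp).symm
  have := val_cycleIcc (hkm.trans hmj.le) x
  have := val_succ_of_lt hmj
  simp only [mem_insert, mem_Ico, Fin.lt_def, Fin.le_def, Fin.ext_iff] at *
  grind

theorem augmentedTwistWeight_mul_inv (hkm : k ≤ m) (hmj : m < j) (τ : Perm (Fin n)) :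
    augmentedTwistWeight q k j (τ * (Fin.cycleIcc k m)⁻¹) =
      q (τ m) (τ j) * twistWeight q (Fin.cycleIcc k j) τ := by
  have : NeZero n := ⟨k.pos.ne'⟩
  have hkj := hkm.trans_lt hmj
  have hinvk : (Fin.cycleIcc k m)⁻¹ k = m := by
    rw [Perm.inv_eq_iff_eq, Fin.cycleIcc_of_last hkm]
  have hinvj : (Fin.cycleIcc k m)⁻¹ j = j := by
    rw [Perm.inv_eq_iff_eq, Fin.cycleIcc_of_gt hmj]
  have hIco : ∏ x ∈ Ico k j, q (τ j) (τ ((Fin.cycleIcc k m)⁻¹ x)) =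
      ∏ x ∈ Ico k j, q (τ j) (τ x) := by
    refine (prod_equiv (Fin.cycleIcc k m) (fun x => ?_) fun _ _ => by simp).symm
    have := val_cycleIcc hkm x
    simp only [mem_Ico, Fin.lt_def, Fin.le_def, Fin.ext_iff] at *
    grind
  have hk : k ∉ Ico (Order.succ k) j := fun hmem =>
    (Order.lt_succ_of_not_isMax hkj.not_isMax).not_ge (mem_Ico.mp hmem).1
  rw [augmentedTwistWeight, twistWeight_cycleIcc q (Order.succ_le_of_lt hkj),
    twistWeight_cycleIcc q hkj.le, ← hIco, ← insert_Ico_succ_left_eq_Ico hkj, prod_insert hk]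
  simp only [Perm.mul_apply, hinvk, hinvj, mul_assoc]

theorem twistMatrix_cycleIcc_succ_mul (hkm : k ≤ m) (hmj : m < j) :
    twistMatrix q (Fin.cycleIcc k (Order.succ m)) * twistMatrix q (Fin.cycleIcc k j) =
      augmentedTwistMatrix q k j * twistMatrix q (Fin.cycleIcc k m) := by
  rw [twistMatrix, twistMatrix, augmentedTwistMatrix, twistMatrix, weightedTranslation_mul,
    weightedTranslation_mul, cycleIcc_succ_right_mul_cycleIcc hkm hmj]
  congr 1
  ext τ
  rw [twistWeight_cycleIcc_succ_mul_inv q hkm hmj, augmentedTwistWeight_mul_inv q hkm hmj]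
  ring

theorem sum_twistMatrix_mul_one_sub (h : k < j) :
    (∑ m ∈ Icc k j, twistMatrix q (Fin.cycleIcc k m)) * (1 - twistMatrix q (Fin.cycleIcc k j)) =
      (1 - augmentedTwistMatrix q k j) * ∑ m ∈ Ico k j, twistMatrix q (Fin.cycleIcc k m) := by
  let A (m : Fin n) := twistMatrix q (Fin.cycleIcc k m)
  have hlast : ∑ m ∈ Icc k j, A m = A j + ∑ m ∈ Ico k j, A m := (add_sum_Ico_eq_sum_Icc h.le).symm
  have hfirst : ∑ m ∈ Icc k j, A m = 1 + ∑ m ∈ Ico k j, A (Order.succ m) := by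
    rw [← add_sum_Ioc_eq_sum_Icc h.le, sum_Ioc_eq_sum_Ico_succ]
    exact congrArg (· + _) (twistMatrix_cycleIcc_self q k)
  have hrel : (∑ m ∈ Ico k j, A (Order.succ m)) * A j =
      augmentedTwistMatrix q k j * ∑ m ∈ Ico k j, A m := by
    rw [sum_mul, mul_sum]
    exact sum_congr rfl fun m hm =>
      twistMatrix_cycleIcc_succ_mul q (mem_Ico.mp hm).1 (mem_Ico.mp hm).2
  calc
    (∑ m ∈ Icc k j, A m) * (1 - A j)
        = ∑ m ∈ Icc k j, A m - (∑ m ∈ Icc k j, A m) * A j := by rw [mul_sub, mul_one]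
    _ = (A j + ∑ m ∈ Ico k j, A m) - (1 + ∑ m ∈ Ico k j, A (Order.succ m)) * A j := by
      rw [← hfirst, ← hlast]
    _ = (1 - augmentedTwistMatrix q k j) * ∑ m ∈ Ico k j, A m := by
      rw [add_mul, one_mul, hrel, sub_mul, one_mul]
      abel

end Relation

section Factorization

variable {R : Type*} [CommRing R] {n : ℕ}

theorem subsetFactor_mem_nonZeroDivisors {q : Fin n → Fin n → R} {m : ℕ}
    (hq : ∀ T : Finset (Fin n), #T = m → 1 - pairProd q T ∈ R⁰) : subsetFactor q m ∈ R⁰ :=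
  prod_mem fun T hT => pow_mem (hq T (mem_powersetCard_univ.mp hT)) _

theorem det_sum_twistMatrix_eq_mul {q : Fin n → Fin n → R}
    (hq : ∀ T : Finset (Fin n), 2 ≤ #T → 1 - pairProd q T ∈ R⁰) {k j : Fin n} (h : k < j) :
    (∑ m ∈ Icc k j, twistMatrix q (Fin.cycleIcc k m)).det =
      subsetFactor q (j + 1 - k) * (∑ m ∈ Ico k j, twistMatrix q (Fin.cycleIcc k m)).det := by
  have hF : subsetFactor q (j + 1 - k) ∈ R⁰ :=
    subsetFactor_mem_nonZeroDivisors fun T hT => hq T (by lia)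
  have hexp : (j : ℕ) + 1 - k = j - k + 1 := Nat.succ_sub h.le
  have hdet := congrArg det (sum_twistMatrix_mul_one_sub q h)
  rw [det_mul, det_mul, det_one_sub_twistMatrix_cycleIcc q h,
    det_one_sub_augmentedTwistMatrix q h] at hdet
  refine (mul_cancel_right_mem_nonZeroDivisors (pow_mem hF (j - k))).mp ?_
  rw [hdet, hexp, pow_succ]
  ring

theorem det_sum_twistMatrix_of_nonZeroDivisors {q : Fin n → Fin n → R}
    (hq : ∀ T : Finset (Fin n), 2 ≤ #T → 1 - pairProd q T ∈ R⁰) {k j : Fin n} (h : k ≤ j) :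
    (∑ m ∈ Icc k j, twistMatrix q (Fin.cycleIcc k m)).det =
      ∏ m ∈ Icc 2 (j + 1 - k : ℕ), subsetFactor q m := by
  induction h using Succ.rec with
  | rfl =>
    rw [Icc_self, sum_singleton, twistMatrix_cycleIcc_self, det_one, Nat.add_sub_cancel_left,
      Icc_eq_empty (by decide), prod_empty]
  | succ j hkj ih =>
    by_cases hj : IsMax j
    · rwa [hj.succ_eq]
    · have hlt := Order.lt_succ_of_not_isMax hj
      have hval : ((Order.succ j : Fin n) : ℕ) + 1 - k = (j + 1 - k : ℕ) + 1 := by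
        rw [val_succ_of_lt hlt]
        lia
      rw [det_sum_twistMatrix_eq_mul hq (hkj.trans_lt hlt), Ico_succ_right_eq_Icc_of_not_isMax hj,
        ih, hval, mul_comm, prod_Icc_succ_top (by lia)]

variable {S : Type*} [CommRing S] (f : R →+* S) (q : Fin n → Fin n → R)

theorem map_twistMatrix (g : Perm (Fin n)) :
    (twistMatrix q g).map f = twistMatrix (fun i j => f (q i j)) g := by
  rw [twistMatrix, map_weightedTranslation, twistMatrix]
  congr 1
  ext τ
  simp [twistWeight]

theorem map_pairProd (T : Finset (Fin n)) :
    f (pairProd q T) = pairProd (fun i j => f (q i j)) T :=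
  map_prod f _ _

theorem map_subsetFactor (m : ℕ) :
    f (subsetFactor q m) = subsetFactor (fun i j => f (q i j)) m := by
  simp [subsetFactor, map_pairProd]

theorem one_sub_pairProd_X_mem_nonZeroDivisors {T : Finset (Fin n)} (hT : 2 ≤ #T) :
    1 - pairProd (fun i j => (MvPolynomial.X (i, j) : MvPolynomial (Fin n × Fin n) ℤ)) T ∈
      (MvPolynomial (Fin n × Fin n) ℤ)⁰ := by
  obtain ⟨a, ha, b, hb, hab⟩ := one_lt_card.mp hT
  refine mem_nonZeroDivisors_of_ne_zero fun h => one_ne_zero (α := ℤ) ?_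
  have hzero : pairProd (fun _ _ => (0 : ℤ)) T = 0 :=
    prod_eq_zero (mem_offDiag.mpr ⟨ha, hb, hab⟩ : (a, b) ∈ T.offDiag) rfl
  simpa [map_pairProd, hzero] using congrArg MvPolynomial.constantCoeff h

theorem det_sum_twistMatrix {k j : Fin n} (h : k ≤ j) :
    (∑ m ∈ Icc k j, twistMatrix q (Fin.cycleIcc k m)).det =
      ∏ m ∈ Icc 2 (j + 1 - k : ℕ), subsetFactor q m := by
  let φ : MvPolynomial (Fin n × Fin n) ℤ →+* R :=
    MvPolynomial.eval₂Hom (Int.castRingHom R) fun p => q p.1 p.2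
  have hφ : (fun i j => φ (MvPolynomial.X (i, j))) = q := by
    ext i j
    simp [φ]
  have hgen := congrArg φ (det_sum_twistMatrix_of_nonZeroDivisors
    (fun T => one_sub_pairProd_X_mem_nonZeroDivisors (T := T)) h)
  rw [RingHom.map_det, map_sum, map_prod] at hgen
  simpa only [RingHom.mapMatrix_apply, map_twistMatrix, map_subsetFactor, hφ] using hgen

end Factorization

theorem det_B_factorization_general {R : Type*} [CommRing R] {n : ℕ} (q : Fin n → Fin n → R)
    (k : Fin n) (t : Fin n → Perm (Fin n)) (ht : ∀ m, k ≤ m → IsTCycle k m (t m)) :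
    (∑ m ∈ Ici k, twistMatrix q (t m)).det =
      ∏ m ∈ Icc 2 (n - k : ℕ), ∏ T ∈ powersetCard m univ,
        (1 - pairProd q T) ^ ((m - 2).factorial * (n - m).factorial) := by
  obtain _ | N := n
  · exact k.elim0
  have hsum : ∑ m ∈ Ici k, twistMatrix q (t m) =
      ∑ m ∈ Icc k (Fin.last N), twistMatrix q (Fin.cycleIcc k m) := by
    rw [← Fin.top_eq_last, Icc_top]
    exact sum_congr rfl fun m hm => by
      rw [(ht m (mem_Ici.mp hm)).eq_cycleIcc (mem_Ici.mp hm)]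
  rw [hsum]
  exact det_sum_twistMatrix q (Fin.le_last k)

/-- For `1 ≤ k ≤ n−1`, the determinant of `B_{Q,n−k+1} = ∑_{m=k}^{n} M_q(t_{m,k})`
factors as `∏_{m=2}^{n−k+1} ∏_T (1 − σ_T)^{(m−2)!·(n−m)!}`, the inner product being
over all subsets `T ⊆ Fin n` of cardinality `m`. (For `k = 1` this is the determinant
of the matrix of the multidegree operator `∂^Q` on a generic weight subspace.) -/
theorem det_B_factorization (n : ℕ) (hn : 1 ≤ n) (q : Fin n → Fin n → ℂ)
    (t : Fin n → Fin n → Equiv.Perm (Fin n))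
    (ht : ∀ a b : Fin n, a ≤ b → IsTCycle a b (t b a))
    (k : Fin n) (hk : (k : ℕ) + 1 < n) :
    (∑ m ∈ Finset.Ici k, twistMat n q (t m k)).det =
      ∏ m ∈ Finset.Icc 2 (n - (k : ℕ)),
        ∏ T ∈ Finset.powersetCard m (Finset.univ : Finset (Fin n)),
          (1 - sigmaT q T) ^ (Nat.factorial (m - 2) * Nat.factorial (n - m)) := by
  rw [sigmaT_eq_pairProd]
  exact det_B_factorization_general q k (t · k) (ht k)
end
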